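/- arXiv:2507.17328 — 5 statements merged into one kernel-verified Lean document; each statement's English description precedes it below -/
import Mathlib

section
/- Let (X, d) be a metric space, let G, Ĝ : X → X be maps, and write G^[0] = id and G^[m+1] = G ∘ G^[m] (similarly for Ĝ). Let K ⊆ X, n ≥ 1 an integer, L ≥ 0, δ > 0, r > 0, and let S = { x ∈ X : there exist a ∈ K and l ∈ {0, …, n−1} with d(x, G^[l](a)) ≤ r } be the closed r-neighborhood of the first n iterates of K under G. Assume: (i) G is Lipschitz with constant L on S, i.e. d(G(x), G(y)) ≤ L·d(x,y) for all x,y ∈ S; (ii) d(G(x), Ĝ(x)) ≤ δ for all x ∈ S; (iii) δ · (1 + L + L² + … + L^{n−1}) ≤ r. Then for every a ∈ K, d(G^[n](a), Ĝ^[n](a)) ≤ δ · (1 + L + L² + … + L^{n−1}). -/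
open Finset Function Metric

/-! With `e m` the distance between the two trajectories after `m` steps, the triangle inequality
through `G (Ghat^[m] a)` gives `e (m + 1) ≤ L * e m + δ`, provided that `Ghat^[m] a` is within `r`
of `G^[m] a`. The resulting bounds `δ * (1 + L + ⋯ + L ^ (m - 1))` increase with `m` and stay below
`r` up to `m = n`, so the approximate trajectory never leaves the region where the recursion holds.
-/

theorem le_mul_geom_sum_of_forall_lt_le_mul_add {R : Type*} [CommSemiring R] [PartialOrder R]
    [IsOrderedRing R] {e : ℕ → R} {L δ r : R} {n : ℕ} (hL : 0 ≤ L) (hδ : 0 ≤ δ) (h_zero : e 0 ≤ 0)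
    (h_succ : ∀ m < n, e m ≤ r → e (m + 1) ≤ L * e m + δ) (hr : δ * ∑ l ∈ range n, L ^ l ≤ r) :
    e n ≤ δ * ∑ l ∈ range n, L ^ l := by
  induction n with
  | zero => simpa using h_zero
  | succ n ih =>
    have h_mono : δ * ∑ l ∈ range n, L ^ l ≤ δ * ∑ l ∈ range (n + 1), L ^ l := by
      rw [sum_range_succ]
      exact mul_le_mul_of_nonneg_left (le_add_of_nonneg_right (pow_nonneg hL n)) hδ
    have h_bound : e n ≤ δ * ∑ l ∈ range n, L ^ l :=
      ih (fun m hm => h_succ m (hm.trans n.lt_succ_self)) (h_mono.trans hr)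
    calc e (n + 1) ≤ L * e n + δ := h_succ n n.lt_succ_self (h_bound.trans (h_mono.trans hr))
      _ ≤ L * (δ * ∑ l ∈ range n, L ^ l) + δ := by gcongr
      _ = δ * ∑ l ∈ range (n + 1), L ^ l := by rw [geom_sum_succ]; ring

theorem rollout_stability_neighborhood_general {X : Type*} [PseudoMetricSpace X] {G Ghat : X → X}
    {a : X} {n : ℕ} {L δ r : ℝ} (hL : 0 ≤ L) (hδ : 0 ≤ δ)
    (hLip : ∀ m < n, ∀ y ∈ closedBall (G^[m] a) r,
      dist (G (G^[m] a)) (G y) ≤ L * dist (G^[m] a) y)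
    (happrox : ∀ m < n, ∀ y ∈ closedBall (G^[m] a) r, dist (G y) (Ghat y) ≤ δ)
    (hgeom : δ * ∑ l ∈ range n, L ^ l ≤ r) :
    dist (G^[n] a) (Ghat^[n] a) ≤ δ * ∑ l ∈ range n, L ^ l := by
  refine le_mul_geom_sum_of_forall_lt_le_mul_add (e := fun m => dist (G^[m] a) (Ghat^[m] a))
    hL hδ (dist_self a).le (fun m hm h_close => ?_) hgeom
  have h_mem : Ghat^[m] a ∈ closedBall (G^[m] a) r := mem_closedBall'.2 h_close
  simp only [iterate_succ_apply']
  calc dist (G (G^[m] a)) (Ghat (Ghat^[m] a))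
      ≤ dist (G (G^[m] a)) (G (Ghat^[m] a)) + dist (G (Ghat^[m] a)) (Ghat (Ghat^[m] a)) :=
        dist_triangle _ _ _
    _ ≤ L * dist (G^[m] a) (Ghat^[m] a) + δ :=
        add_le_add (hLip m hm _ h_mem) (happrox m hm _ h_mem)

open Finset in
/-- Rollout stability estimate: if `G` is `L`-Lipschitz on the closed `r`-neighborhood
`S` of the first `n` iterates of `K` under `G`, `Ĝ` is a `δ`-accurate one-step
approximation of `G` on `S`, and `δ·(1 + L + ⋯ + L^(n-1)) ≤ r`, then the `n`-fold
composition error on `K` is at most `δ·(1 + L + ⋯ + L^(n-1))`. -/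
theorem rollout_stability_neighborhood
    {X : Type*} [MetricSpace X] (G Ghat : X → X) (K : Set X)
    (n : ℕ) (hn : 1 ≤ n) (L δ r : ℝ) (hL : 0 ≤ L) (hδ : 0 < δ) (hr : 0 < r)
    (S : Set X)
    (hS : S = {x : X | ∃ a ∈ K, ∃ l : ℕ, l < n ∧ dist x (G^[l] a) ≤ r})
    (hLip : ∀ x ∈ S, ∀ y ∈ S, dist (G x) (G y) ≤ L * dist x y)
    (happrox : ∀ x ∈ S, dist (G x) (Ghat x) ≤ δ)
    (hgeom : δ * (∑ l ∈ range n, L ^ l) ≤ r) :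
    ∀ a ∈ K, dist (G^[n] a) (Ghat^[n] a) ≤ δ * (∑ l ∈ range n, L ^ l) := by
  subst hS
  exact fun a ha => rollout_stability_neighborhood_general hL hδ.le
    (fun m hm y hy => hLip _ ⟨a, ha, m, hm, mem_closedBall_self hr.le⟩ y ⟨a, ha, m, hm, hy⟩)
    (fun m hm y hy => happrox y ⟨a, ha, m, hm, hy⟩) hgeom
end

section
/- Let X be a real normed vector space, let G, Ĝ : X → X be maps, and write Ĝ^[1] = Ĝ, Ĝ^[m+1] = Ĝ ∘ Ĝ^[m]. Let K ⊆ X, let n ≥ 1 be an integer, let ε > 0, and let M₁, …, M_n be positive reals with ε ≤ M_l for every l ∈ {1, …, n}. Assume: (i) ‖G(a)‖ ≤ M₁ for every a ∈ K; (ii) for every l ∈ {1, …, n−1} and every x ∈ X with ‖x‖ ≤ 2M_l, one has ‖G(x)‖ ≤ M_{l+1}; (iii) ‖G(x) − Ĝ(x)‖ ≤ ε for every x in the set K ∪ ⋃_{l=1}^{n−1} { x ∈ X : ‖x‖ ≤ 2M_l }. Then for every l ∈ {1, …, n} and every a ∈ K, ‖Ĝ^[l](a)‖ ≤ 2M_l.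 -/
open Function Metric Set

theorem mapsTo_iterate_of_mapsTo_succ {α : Type*} {f : α → α} {S : ℕ → Set α} {n : ℕ}
    (h : ∀ k < n, MapsTo f (S k) (S (k + 1))) : MapsTo f^[n] (S 0) (S n) := by
  induction n with
  | zero => exact mapsTo_id _
  | succ n ih =>
    rw [iterate_succ']
    exact (h n n.lt_succ_self).comp (ih fun k hk => h k (hk.trans n.lt_succ_self))

theorem mapsTo_closedBall_add_of_dist_le {α β : Type*} [PseudoMetricSpace β] {f g : α → β}
    {s : Set α} {c : β} {r ε : ℝ} (hf : MapsTo f s (closedBall c r))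
    (hfg : ∀ x ∈ s, dist (f x) (g x) ≤ ε) : MapsTo g s (closedBall c (r + ε)) := by
  intro x hx
  calc
    dist (g x) c ≤ dist (f x) (g x) + dist (f x) c := dist_triangle_left _ _ _
    _ ≤ ε + r := add_le_add (hfg x hx) (hf hx)
    _ = r + ε := add_comm _ _

theorem approx_iterates_stay_in_balls_general {X : Type*} [PseudoMetricSpace X]
    {G Ghat : X → X} {K : Set X} {c : X} {n : ℕ} {ε : ℝ} {M : ℕ → ℝ}
    (hεM : ∀ l, 1 ≤ l → l ≤ n → ε ≤ M l)
    (hG₁ : MapsTo G K (closedBall c (M 1)))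
    (hGball : ∀ l, 1 ≤ l → l < n →
      MapsTo G (closedBall c (2 * M l)) (closedBall c (M (l + 1))))
    (happrox : ∀ x ∈ K ∪ ⋃ l ∈ Ico 1 n, closedBall c (2 * M l), dist (G x) (Ghat x) ≤ ε)
    {l : ℕ} (hl : 1 ≤ l) (hln : l ≤ n) :
    MapsTo Ghat^[l] K (closedBall c (2 * M l)) := by
  have radius_le {k : ℕ} (hk : 1 ≤ k) (hkn : k ≤ n) : M k + ε ≤ 2 * M k := by
    linarith [hεM k hk hkn]
  have initial : MapsTo Ghat K (closedBall c (2 * M 1)) :=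
    (mapsTo_closedBall_add_of_dist_le hG₁ fun x hx => happrox x (.inl hx)).mono_right
      (closedBall_subset_closedBall (radius_le le_rfl (hl.trans hln)))
  have step (k : ℕ) (hk : 1 ≤ k) (hkn : k < n) :
      MapsTo Ghat (closedBall c (2 * M k)) (closedBall c (2 * M (k + 1))) :=
    (mapsTo_closedBall_add_of_dist_le (hGball k hk hkn) fun x hx =>
      happrox x (.inr (mem_biUnion (mem_Ico.mpr ⟨hk, hkn⟩) hx))).mono_right
      (closedBall_subset_closedBall (radius_le k.succ_pos hkn))
  obtain ⟨m, rfl⟩ := Nat.exists_eq_add_of_le' hl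
  rw [iterate_succ]
  exact (mapsTo_iterate_of_mapsTo_succ (S := fun k => closedBall c (2 * M (k + 1)))
    fun k hk => step (k + 1) k.succ_pos (by lia)).comp initial

/-- If `G` maps `K` into the ball of radius `M₁`, maps each ball of radius `2Mₗ`
into the ball of radius `M_{l+1}`, and `Ĝ` is uniformly `ε`-close to `G` on `K` and
on all these balls with `ε ≤ Mₗ` for every `l`, then the iterates of `Ĝ` starting
in `K` satisfy `‖Ĝ^[l](a)‖ ≤ 2Mₗ` for `1 ≤ l ≤ n`. -/
theorem approx_iterates_stay_in_balls
    {X : Type*} [NormedAddCommGroup X] [NormedSpace ℝ X]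
    (G Ghat : X → X) (K : Set X) (n : ℕ) (hn : 1 ≤ n)
    (ε : ℝ) (hε : 0 < ε) (M : ℕ → ℝ)
    (hMpos : ∀ l : ℕ, 1 ≤ l → l ≤ n → 0 < M l)
    (hεM : ∀ l : ℕ, 1 ≤ l → l ≤ n → ε ≤ M l)
    (hG₁ : ∀ a ∈ K, ‖G a‖ ≤ M 1)
    (hGball : ∀ l : ℕ, 1 ≤ l → l < n → ∀ x : X, ‖x‖ ≤ 2 * M l → ‖G x‖ ≤ M (l + 1))
    (happrox : ∀ x ∈ K ∪ ⋃ l ∈ Set.Ico 1 n, {x : X | ‖x‖ ≤ 2 * M l},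
      ‖G x - Ghat x‖ ≤ ε) :
    ∀ l : ℕ, 1 ≤ l → l ≤ n → ∀ a ∈ K, ‖Ghat^[l] a‖ ≤ 2 * M l := by
  simp only [← mem_closedBall_zero_iff, ← dist_eq_norm] at hG₁ hGball happrox ⊢
  exact fun l hl hln => approx_iterates_stay_in_balls_general hεM hG₁ hGball happrox hl hln
end

section
/- Let X be a real Banach space and Y a real normed vector space, and let j : Y → X be an injective continuous linear map which maps every bounded subset of Y to a relatively compact subset of X (a compact embedding). Let G : X → Y be Lipschitz on every compact subset of X, i.e. for every compact Q ⊆ X there exists L_Q ≥ 0 with ‖G(x) − G(y)‖_Y ≤ L_Q ‖x − y‖_X for all x, y ∈ Q. Let F be a family of maps from X to Y with the approximation property: for every compact Q ⊆ X and every η > 0 there exists Ĝ ∈ F such that ‖G(x) − Ĝ(x)‖_Y < η for all x ∈ Q. For a map H : X → Y define its j-iterates T_H^(1) = H and T_H^(m+1)(x) = H(j(T_H^(m)(x))). Then for every compact set K ⊆ X, every integer n ≥ 1 and every ε > 0, there exists Ĝ ∈ F such that ‖T_G^(n)(a) − T_Ĝ^(n)(a)‖_Y < ε for every a ∈ K.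 -/
/-- The `j`-iterates of a map `H : X → Y`: `jIter j H 1 = H` and, for `m ≥ 1`,
`jIter j H (m+1) x = H (j (jIter j H m x))`, i.e. `H` is composed with its own
output viewed back in `X` through `j`. (The value at index `0` is junk.) -/
def jIter {X Y : Type*} (j : Y → X) (H : X → Y) : ℕ → X → Y
  | 0 => H
  | 1 => H
  | m + 2 => fun x => H (j (jIter j H (m + 1) x))

/-! In the topology of uniform convergence on compact sets, the approximation property says that
`G` lies in the closure of `F`, so it suffices that `H ↦ jIter j H n` is continuous at `G`. Since
`j` maps a neighborhood of each point into a compact set, convergence `H → G` on compact sets makes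
`H ∘ j → G ∘ j` locally uniform on all of `Y`; locally uniform convergence to continuous limits
passes to compositions, and one inducts on `n`. -/

open Filter Set Topology UniformConvergence Uniformity UniformOnFun

section LocallyUniformConvergence

variable {ι X Y Z : Type*} [TopologicalSpace X] [UniformSpace Y] [UniformSpace Z]
  {p : Filter ι} {S : ι → X → Y} {T : X → Y} {s : Set X}

theorem tendstoLocallyUniformlyOn_iff_forall_tendsto_nhds (hT : ContinuousOn T s) :
    TendstoLocallyUniformlyOn S T p s ↔
      ∀ x ∈ s, Tendsto (fun q : ι × X ↦ S q.1 q.2) (p ×ˢ 𝓝[s] x) (𝓝 (T x)) := by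
  rw [tendstoLocallyUniformlyOn_iff_forall_tendsto]
  refine forall₂_congr fun x hx ↦ ?_
  have hTx : Tendsto (fun q : ι × X ↦ T q.2) (p ×ˢ 𝓝[s] x) (𝓝 (T x)) :=
    (hT x hx).tendsto.comp tendsto_snd
  refine ⟨fun hS ↦ ?_, fun hS ↦ (hTx.prodMk_nhds hS).mono_right (nhds_le_uniformity (T x))⟩
  exact Uniform.tendsto_nhds_right.2 ((Uniform.tendsto_nhds_right.1 hTx).uniformity_trans hS)

/-- For a continuous limit, locally uniform convergence `S i → T` means that `S i y → T x` as
`i → ∞` and `y → x` jointly, and such joint limits compose. -/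
theorem tendstoLocallyUniformlyOn_comp_of_continuous {Φ : ι → Y → Z} {φ : Y → Z}
    (hφ : Continuous φ) (hΦ : TendstoLocallyUniformly Φ φ p)
    (hT : ContinuousOn T s) (hS : TendstoLocallyUniformlyOn S T p s) :
    TendstoLocallyUniformlyOn (fun i ↦ Φ i ∘ S i) (φ ∘ T) p s := by
  rw [tendstoLocallyUniformlyOn_iff_forall_tendsto_nhds hT] at hS
  rw [← tendstoLocallyUniformlyOn_univ,
    tendstoLocallyUniformlyOn_iff_forall_tendsto_nhds hφ.continuousOn] at hΦ
  simp only [nhdsWithin_univ] at hΦ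
  exact (tendstoLocallyUniformlyOn_iff_forall_tendsto_nhds (hφ.comp_continuousOn hT)).2
    fun x hx ↦ (hΦ (T x) (mem_univ _)).comp (tendsto_fst.prodMk (hS x hx))

end LocallyUniformConvergence

theorem ofFun_mem_closure_image_iff {X Y : Type*} [UniformSpace Y] {𝔖 : Set (Set X)}
    (h𝔖 : 𝔖.Nonempty) (h𝔖_dir : DirectedOn (· ⊆ ·) 𝔖) {G : X → Y} {F : Set (X → Y)} :
    ofFun 𝔖 G ∈ closure (ofFun 𝔖 '' F) ↔
      ∀ Q ∈ 𝔖, ∀ V ∈ 𝓤 Y, ∃ H ∈ F, ∀ x ∈ Q, (G x, H x) ∈ V := by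
  rw [mem_closure_iff_nhds_basis
    (nhds_basis_uniformity' (UniformOnFun.hasBasis_uniformity X Y 𝔖 h𝔖 h𝔖_dir))]
  simp only [exists_mem_image, and_imp, Prod.forall]
  exact forall_congr' fun _ ↦ forall_comm

/-- A locally compact map in the sense of fixed point theory: a continuous map sending some
neighborhood of each point into a compact set. For linear maps between normed spaces this is
equivalent to being a continuous `IsCompactOperator`. -/
structure IsLocallyCompactMap {X Y : Type*} [TopologicalSpace X] [TopologicalSpace Y]
    (f : X → Y) : Prop where
  continuous : Continuous f
  exists_isCompact : ∀ x, ∃ Q, IsCompact Q ∧ f ⁻¹' Q ∈ 𝓝 x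

theorem isLocallyCompactMap_of_isCompact_closure_image {X Y : Type*} [TopologicalSpace X]
    [PseudoMetricSpace Y] {j : Y → X} (hj : Continuous j)
    (hj_cpt : ∀ B : Set Y, Bornology.IsBounded B → IsCompact (closure (j '' B))) :
    IsLocallyCompactMap j where
  continuous := hj
  exists_isCompact y :=
    ⟨closure (j '' Metric.ball y 1), hj_cpt _ Metric.isBounded_ball,
      mem_of_superset (Metric.ball_mem_nhds y one_pos) (image_subset_iff.1 subset_closure)⟩

namespace IsLocallyCompactMap

variable {ι X Y Z : Type*} [TopologicalSpace X] {j : Y → X} {G : X → Z}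

theorem continuous_comp [TopologicalSpace Y] [TopologicalSpace Z] (hj : IsLocallyCompactMap j)
    (hG : ∀ Q, IsCompact Q → ContinuousOn G Q) : Continuous (G ∘ j) := by
  refine continuous_iff_continuousAt.2 fun y ↦ ?_
  obtain ⟨Q, hQ, hQy⟩ := hj.exists_isCompact y
  exact ((hG Q hQ).comp hj.continuous.continuousOn (mapsTo_preimage j Q)).continuousAt hQy

theorem tendstoLocallyUniformly_comp [TopologicalSpace Y] [UniformSpace Z]
    (hj : IsLocallyCompactMap j) {p : Filter ι} {H : ι → X → Z}
    (hH : ∀ Q, IsCompact Q → TendstoUniformlyOn H G p Q) :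
    TendstoLocallyUniformly (fun i ↦ H i ∘ j) (G ∘ j) p := by
  refine tendstoLocallyUniformly_of_forall_exists_nhds fun y ↦ ?_
  obtain ⟨Q, hQ, hQy⟩ := hj.exists_isCompact y
  exact ⟨j ⁻¹' Q, hQy, (hH Q hQ).comp j⟩

end IsLocallyCompactMap

section JIter

variable {ι X Y : Type*} [TopologicalSpace X] {j : Y → X} {G : X → Y}

theorem continuousOn_jIter [TopologicalSpace Y] (hj : IsLocallyCompactMap j)
    (hG : ∀ Q, IsCompact Q → ContinuousOn G Q) {K : Set X} (hK : IsCompact K) (m : ℕ) :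
    ContinuousOn (jIter j G (m + 1)) K := by
  induction m with
  | zero => exact hG K hK
  | succ m ih => exact (hj.continuous_comp hG).comp_continuousOn ih

variable [UniformSpace Y]

theorem tendstoUniformlyOn_jIter (hj : IsLocallyCompactMap j)
    (hG : ∀ Q, IsCompact Q → ContinuousOn G Q) {p : Filter ι} {H : ι → X → Y}
    (hH : ∀ Q, IsCompact Q → TendstoUniformlyOn H G p Q)
    {K : Set X} (hK : IsCompact K) (m : ℕ) :
    TendstoUniformlyOn (fun i ↦ jIter j (H i) (m + 1)) (jIter j G (m + 1)) p K := by
  rw [← tendstoLocallyUniformlyOn_iff_tendstoUniformlyOn_of_compact hK]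
  induction m with
  | zero => exact (hH K hK).tendstoLocallyUniformlyOn
  | succ m ih =>
    exact tendstoLocallyUniformlyOn_comp_of_continuous (φ := G ∘ j) (hj.continuous_comp hG)
      (hj.tendstoLocallyUniformly_comp hH) (continuousOn_jIter hj hG hK m) ih

theorem continuousAt_jIter (hj : IsLocallyCompactMap j)
    (hG : ∀ Q, IsCompact Q → ContinuousOn G Q) (m : ℕ) :
    ContinuousAt (fun H : X →ᵤ[{Q | IsCompact Q}] Y ↦
      ofFun {Q | IsCompact Q} (jIter j (toFun _ H) (m + 1))) (ofFun _ G) :=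
  UniformOnFun.tendsto_iff_tendstoUniformlyOn.2 fun _ hK ↦
    tendstoUniformlyOn_jIter hj hG (UniformOnFun.tendsto_iff_tendstoUniformlyOn.1 tendsto_id) hK m

theorem jIter_approx_general (hj : IsLocallyCompactMap j)
    (hG : ∀ Q, IsCompact Q → ContinuousOn G Q) {F : Set (X → Y)}
    (hF : ∀ Q, IsCompact Q → ∀ V ∈ 𝓤 Y, ∃ Ghat ∈ F, ∀ x ∈ Q, (G x, Ghat x) ∈ V)
    {K : Set X} (hK : IsCompact K) {n : ℕ} (hn : 1 ≤ n) (V : Set (Y × Y)) (hV : V ∈ 𝓤 Y) :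
    ∃ Ghat ∈ F, ∀ a ∈ K, (jIter j G n a, jIter j Ghat n a) ∈ V := by
  obtain ⟨m, rfl⟩ := Nat.exists_eq_add_of_le' hn
  have closure_iff {G' : X → Y} {F' : Set (X → Y)} :=
    ofFun_mem_closure_image_iff (𝔖 := {Q | IsCompact Q}) (G := G') (F := F') ⟨∅, isCompact_empty⟩
      (directedOn_of_sup_mem fun _ _ ↦ IsCompact.union)
  have jIter_mem_closure : ofFun {Q | IsCompact Q} (jIter j G (m + 1)) ∈
      closure (ofFun {Q | IsCompact Q} '' ((jIter j · (m + 1)) '' F)) := by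
    have mem_closure := mem_closure_image (continuousAt_jIter hj hG m) (closure_iff.2 hF)
    rwa [image_image] at mem_closure ⊢
  simpa only [exists_mem_image] using closure_iff.1 jIter_mem_closure K hK V hV

end JIter

section Norm

variable {X Y : Type*} [SeminormedAddCommGroup Y] {G : X → Y}

theorem continuousOn_of_norm_sub_le_mul [SeminormedAddCommGroup X] {Q : Set X} {L : ℝ}
    (hG : ∀ x ∈ Q, ∀ y ∈ Q, ‖G x - G y‖ ≤ L * ‖x - y‖) : ContinuousOn G Q := by
  simp only [← dist_eq_norm] at hG
  exact (LipschitzOnWith.of_dist_le' hG).continuousOn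

theorem exists_forall_mem_uniformity_of_norm {F : Set (X → Y)} {Q : Set X}
    (hF : ∀ η : ℝ, 0 < η → ∃ H ∈ F, ∀ x ∈ Q, ‖G x - H x‖ < η) (V : Set (Y × Y)) (hV : V ∈ 𝓤 Y) :
    ∃ H ∈ F, ∀ x ∈ Q, (G x, H x) ∈ V := by
  obtain ⟨η, hη, hηV⟩ := Metric.mem_uniformity_dist.1 hV
  obtain ⟨H, hHF, hH⟩ := hF η hη
  exact ⟨H, hHF, fun x hx ↦ hηV ((dist_eq_norm _ _).trans_lt (hH x hx))⟩

end Norm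

/-- Given a compact embedding `j : Y → X`, a locally Lipschitz map `G : X → Y`, and a
family `F` of maps approximating `G` uniformly on compact sets, for every compact
`K ⊆ X`, `n ≥ 1` and `ε > 0` there is `Ĝ ∈ F` whose `n`-th `j`-iterate is uniformly
`ε`-close on `K` to the `n`-th `j`-iterate of `G`. -/
theorem jIter_approx
    {X Y : Type*} [NormedAddCommGroup X] [NormedSpace ℝ X] [CompleteSpace X]
    [NormedAddCommGroup Y] [NormedSpace ℝ Y]
    (j : Y →L[ℝ] X) (hj_inj : Function.Injective j)
    (hj_cpt : ∀ B : Set Y, Bornology.IsBounded B → IsCompact (closure (⇑j '' B)))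
    (G : X → Y)
    (hG : ∀ Q : Set X, IsCompact Q → ∃ L : ℝ, 0 ≤ L ∧
      ∀ x ∈ Q, ∀ y ∈ Q, ‖G x - G y‖ ≤ L * ‖x - y‖)
    (F : Set (X → Y))
    (hF : ∀ Q : Set X, IsCompact Q → ∀ η : ℝ, 0 < η →
      ∃ Ghat ∈ F, ∀ x ∈ Q, ‖G x - Ghat x‖ < η)
    (K : Set X) (hK : IsCompact K) (n : ℕ) (hn : 1 ≤ n) (ε : ℝ) (hε : 0 < ε) :
    ∃ Ghat ∈ F, ∀ a ∈ K, ‖jIter (⇑j) G n a - jIter (⇑j) Ghat n a‖ < ε := by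
  have hj := isLocallyCompactMap_of_isCompact_closure_image j.continuous hj_cpt
  have hG_cont (Q : Set X) (hQ : IsCompact Q) : ContinuousOn G Q :=
    let ⟨_, _, hL⟩ := hG Q hQ
    continuousOn_of_norm_sub_le_mul hL
  simpa only [mem_ofPred_eq, dist_eq_norm] using jIter_approx_general hj hG_cont
    (fun Q hQ ↦ exists_forall_mem_uniformity_of_norm (hF Q hQ)) hK hn _
    (Metric.dist_mem_uniformity hε)
end

section
/- Let A be a metric space and let U be a (possibly non-unital) normed ring, so that ‖x·y‖ ≤ ‖x‖‖y‖, which is also a real normed vector space. Fix φ, ψ ∈ U with ‖φ‖ ≥ 1 and ‖ψ‖ ≥ 1, let K ⊆ A × U, let ε > 0, and let L̂₂ ≥ 1. Let G₁, Ĝ₁, G₂, Ĝ₂ : A × U → U be maps such that for every a ∈ A the map g ↦ Ĝ₂(a,g) is Lipschitz on U with constant L̂₂. Define the set K̃ = { (a, G₁(a,g)·φ + g·ψ) : (a,g) ∈ K } and define G(a,g) = G₁(a,g)·φ + G₂(a, G₁(a,g)·φ + g·ψ)·ψ and Ĝ(a,g) = Ĝ₁(a,g)·φ + Ĝ₂(a,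 Ĝ₁(a,g)·φ + g·ψ)·ψ. Assume: (i) ‖G₂(a,h) − Ĝ₂(a,h)‖ < ε / (3‖ψ‖) for every (a,h) ∈ K̃; (ii) ‖G₁(a,g) − Ĝ₁(a,g)‖ < ε / (3 L̂₂ ‖φ‖ ‖ψ‖) for every (a,g) ∈ K. Then ‖G(a,g) − Ĝ(a,g)‖ < ε for every (a,g) ∈ K. -/
/-!
With `q` and `q'` the inputs that the second solver receives from `G₁` and from `Ĝ₁`,
telescope the error through `Ĝ₂ q`:
`G - Ĝ = (G₁ - Ĝ₁) φ + (G₂ q - Ĝ₂ q) ψ + (Ĝ₂ q - Ĝ₂ q') ψ`.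
Thus `G₂` and `Ĝ₂` are compared only on `K̃`, and the Lipschitz bound is spent on the approximate
solver. The last term is at most `L̂₂ ‖ψ‖ ‖φ‖ ‖G₁ - Ĝ₁‖`, which, as `L̂₂ ‖ψ‖ ≥ 1`, also dominates
the first.
-/

open scoped NNReal

section SchwarzBaseOperator

variable {A U : Type*}

/-- The input that the second local solver of the alternating Schwarz method receives once `G₁` has
solved the first local problem. The set `K̃` is the image of `K` under this map. -/
def schwarzIntermediateInput [Add U] [Mul U] (φ ψ : U) (G₁ : A × U → U) (p : A × U) : A × U :=
  (p.1, G₁ p * φ + p.2 * ψ)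

/-- The base operator of the alternating Schwarz method: the two local solutions, computed one after
the other, glued by the partition of unity `φ`, `ψ`. -/
def schwarzBaseOperator [Add U] [Mul U] (φ ψ : U) (G₁ G₂ : A × U → U) (p : A × U) : U :=
  G₁ p * φ + G₂ (schwarzIntermediateInput φ ψ G₁ p) * ψ

theorem schwarzBaseOperator_sub [NonUnitalNonAssocRing U] (φ ψ : U)
    (G₁ Ghat₁ G₂ Ghat₂ : A × U → U) (p : A × U) :
    schwarzBaseOperator φ ψ G₁ G₂ p - schwarzBaseOperator φ ψ Ghat₁ Ghat₂ p =
      (G₁ p - Ghat₁ p) * φ +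
        (G₂ (schwarzIntermediateInput φ ψ G₁ p) - Ghat₂ (schwarzIntermediateInput φ ψ G₁ p)) * ψ +
        (Ghat₂ (schwarzIntermediateInput φ ψ G₁ p) -
          Ghat₂ (schwarzIntermediateInput φ ψ Ghat₁ p)) * ψ := by
  simp only [schwarzBaseOperator, sub_mul]
  abel

variable [NonUnitalSeminormedRing U] {φ ψ : U} {G₁ Ghat₁ G₂ Ghat₂ : A × U → U} {L : ℝ≥0}

theorem norm_schwarzIntermediateInput_snd_sub_le (φ ψ : U) (G₁ Ghat₁ : A × U → U) (p : A × U) :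
    ‖(schwarzIntermediateInput φ ψ G₁ p).2 - (schwarzIntermediateInput φ ψ Ghat₁ p).2‖ ≤
      ‖G₁ p - Ghat₁ p‖ * ‖φ‖ := by
  simpa only [schwarzIntermediateInput, add_sub_add_right_eq_sub, ← sub_mul] using
    norm_mul_le (G₁ p - Ghat₁ p) φ

theorem norm_apply_schwarzIntermediateInput_sub_le {p : A × U}
    (hLip : LipschitzWith L fun g ↦ Ghat₂ (p.1, g)) :
    ‖Ghat₂ (schwarzIntermediateInput φ ψ G₁ p) - Ghat₂ (schwarzIntermediateInput φ ψ Ghat₁ p)‖ ≤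
      L * (‖G₁ p - Ghat₁ p‖ * ‖φ‖) :=
  (hLip.norm_sub_le _ _).trans <| mul_le_mul_of_nonneg_left
    (norm_schwarzIntermediateInput_snd_sub_le φ ψ G₁ Ghat₁ p) L.coe_nonneg

theorem norm_schwarzBaseOperator_sub_le {p : A × U}
    (hLip : LipschitzWith L fun g ↦ Ghat₂ (p.1, g)) :
    ‖schwarzBaseOperator φ ψ G₁ G₂ p - schwarzBaseOperator φ ψ Ghat₁ Ghat₂ p‖ ≤
      ‖G₁ p - Ghat₁ p‖ * ‖φ‖ +
        ‖G₂ (schwarzIntermediateInput φ ψ G₁ p) -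
          Ghat₂ (schwarzIntermediateInput φ ψ G₁ p)‖ * ‖ψ‖ +
        L * (‖G₁ p - Ghat₁ p‖ * ‖φ‖) * ‖ψ‖ := by
  rw [schwarzBaseOperator_sub]
  refine norm_add₃_le.trans <| add_le_add_three (norm_mul_le _ _) (norm_mul_le _ _) ?_
  exact (norm_mul_le _ _).trans <| mul_le_mul_of_nonneg_right
    (norm_apply_schwarzIntermediateInput_sub_le hLip) (norm_nonneg ψ)

theorem schwarz_base_operator_approx_general {K : Set (A × U)} {ε : ℝ} (hφ : 0 < ‖φ‖)
    (hLψ : 1 ≤ L * ‖ψ‖) (hLip : ∀ a, LipschitzWith L fun g ↦ Ghat₂ (a, g))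
    (h₂ : ∀ q ∈ schwarzIntermediateInput φ ψ G₁ '' K, ‖G₂ q - Ghat₂ q‖ < ε / (3 * ‖ψ‖))
    (h₁ : ∀ p ∈ K, ‖G₁ p - Ghat₁ p‖ < ε / (3 * L * ‖φ‖ * ‖ψ‖)) :
    ∀ p ∈ K, ‖schwarzBaseOperator φ ψ G₁ G₂ p - schwarzBaseOperator φ ψ Ghat₁ Ghat₂ p‖ < ε := by
  intro p hp
  have hLψ_pos : 0 < L * ‖ψ‖ := one_pos.trans_le hLψ
  have hL : 0 < (L : ℝ) := pos_of_mul_pos_left hLψ_pos (norm_nonneg ψ)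
  have hψ : 0 < ‖ψ‖ := pos_of_mul_pos_right hLψ_pos L.coe_nonneg
  have second_term_lt : ‖G₂ (schwarzIntermediateInput φ ψ G₁ p) -
      Ghat₂ (schwarzIntermediateInput φ ψ G₁ p)‖ * ‖ψ‖ < ε / 3 := by
    rw [← lt_div_iff₀ hψ, div_div]
    exact h₂ _ (Set.mem_image_of_mem _ hp)
  have lipschitz_term_lt : L * (‖G₁ p - Ghat₁ p‖ * ‖φ‖) * ‖ψ‖ < ε / 3 := by
    have solver_error := h₁ p hp
    rw [lt_div_iff₀ (by positivity)] at solver_error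
    linarith
  have first_term_lt : ‖G₁ p - Ghat₁ p‖ * ‖φ‖ < ε / 3 :=
    calc ‖G₁ p - Ghat₁ p‖ * ‖φ‖
      _ ≤ ‖G₁ p - Ghat₁ p‖ * ‖φ‖ * (L * ‖ψ‖) := le_mul_of_one_le_right (by positivity) hLψ
      _ = L * (‖G₁ p - Ghat₁ p‖ * ‖φ‖) * ‖ψ‖ := by ring
      _ < ε / 3 := lipschitz_term_lt
  refine (norm_schwarzBaseOperator_sub_le (hLip p.1)).trans_lt ?_
  linarith

end SchwarzBaseOperator

/-- Three-epsilon estimate for the alternating Schwarz base operator: if the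
approximate local solvers `Ĝ₂` (globally `L̂₂`-Lipschitz in its second argument)
and `Ĝ₁` satisfy `‖G₂ − Ĝ₂‖ < ε/(3‖ψ‖)` on the set `K̃` of intermediate inputs and
`‖G₁ − Ĝ₁‖ < ε/(3 L̂₂ ‖φ‖ ‖ψ‖)` on `K`, then the glued operators satisfy
`‖G − Ĝ‖ < ε` on `K`. -/
theorem schwarz_base_operator_approx
    {A U : Type*} [MetricSpace A] [NonUnitalNormedRing U] [NormedSpace ℝ U]
    (φ ψ : U) (hφ : 1 ≤ ‖φ‖) (hψ : 1 ≤ ‖ψ‖)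
    (K : Set (A × U)) (ε : ℝ) (hε : 0 < ε) (L₂ : ℝ) (hL₂ : 1 ≤ L₂)
    (G₁ Ghat₁ G₂ Ghat₂ : A × U → U)
    (hGhat₂Lip : ∀ (a : A) (g₁ g₂ : U),
      ‖Ghat₂ (a, g₁) - Ghat₂ (a, g₂)‖ ≤ L₂ * ‖g₁ - g₂‖)
    (G Ghat : A × U → U)
    (hGdef : ∀ (a : A) (g : U),
      G (a, g) = G₁ (a, g) * φ + G₂ (a, G₁ (a, g) * φ + g * ψ) * ψ)
    (hGhatdef : ∀ (a : A) (g : U),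
      Ghat (a, g) = Ghat₁ (a, g) * φ + Ghat₂ (a, Ghat₁ (a, g) * φ + g * ψ) * ψ)
    (h₂ : ∀ q ∈ (fun p : A × U => (p.1, G₁ p * φ + p.2 * ψ)) '' K,
      ‖G₂ q - Ghat₂ q‖ < ε / (3 * ‖ψ‖))
    (h₁ : ∀ p ∈ K, ‖G₁ p - Ghat₁ p‖ < ε / (3 * L₂ * ‖φ‖ * ‖ψ‖)) :
    ∀ p ∈ K, ‖G p - Ghat p‖ < ε := by
  lift L₂ to ℝ≥0 using zero_le_one.trans hL₂
  obtain rfl : G = schwarzBaseOperator φ ψ G₁ G₂ := funext fun p ↦ hGdef p.1 p.2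
  obtain rfl : Ghat = schwarzBaseOperator φ ψ Ghat₁ Ghat₂ := funext fun p ↦ hGhatdef p.1 p.2
  exact schwarz_base_operator_approx_general (one_pos.trans_le hφ)
    (one_le_mul_of_one_le_of_one_le hL₂ hψ)
    (fun a ↦ .of_dist_le_mul <| by simpa only [dist_eq_norm] using hGhat₂Lip a) h₂ h₁
end

section
/- Let X be a real Banach space and Y a real normed vector space, and let j : Y → X be an injective continuous linear map which maps every bounded subset of Y to a relatively compact subset of X. Let G : X → X be Lipschitz on every compact subset of X. Let (M_δ)_{δ ∈ (0,1]} be a family of continuous linear maps M_δ : X → Y satisfying: (i) for every compact Q ⊆ X, every η > 0 and every δ̄ ∈ (0,1], there exists δ₀ ∈ (0, δ̄] with ‖j(M_{δ₀}(x)) − x‖_X < η for all x ∈ Q; (ii) for every compact Q ⊆ X and every δ̄ ∈ (0,1], the set Q ∪ ⋃_{δ ∈ (0,δ̄]} { j(M_δ(x)) : x ∈ Q } has compact closure in X. Let F be a family of maps from X to Y such that for every map H : X → Y which is Lipschitz on every compact subset of X, every compact Q ⊆ X and every η > 0, there exists Ĝ ∈ F with ‖H(x) − Ĝ(x)‖_Y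 < η for all x ∈ Q. For Ĝ ∈ F define U_Ĝ^(1)(x) = j(Ĝ(x)) and U_Ĝ^(m+1)(x) = j(Ĝ(U_Ĝ^(m)(x))), and let G^(m) denote the m-fold composition of G with itself. Then for every compact K ⊆ X, every integer n ≥ 1 and every ε > 0, there exists Ĝ ∈ F such that ‖G^(n)(a) − U_Ĝ^(n)(a)‖_X < ε for every a ∈ K. -/
/-- The rollout of a map `Ghat : X → Y` through an embedding `j : Y → X`:
`rollout j Ghat 1 x = j (Ghat x)` and `rollout j Ghat (m+1) x = j (Ghat (rollout j Ghat m x))`. -/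
def rollout {X Y : Type*} (j : Y → X) (Ghat : X → Y) : ℕ → X → X
  | 0 => fun x => x
  | m + 1 => fun x => j (Ghat (rollout j Ghat m x))

/-!
The rollout of `Ghat` is the iterate of `j ∘ Ghat`, so it suffices that iteration is continuous for
uniform convergence on compact sets. In a space that is not locally compact this fails in general,
because no compact set need contain the orbits of all the approximating maps. Here one does: write
`j (Ghat x) = j (M i (G x)) + j (Ghat x - M i (G x))`. The first summand is close to `G x` and, as
`x` runs over a compact set, stays in a compact set that does not depend on `i`; the second one is
the image under the compact map `j` of a small vector.
-/

open Filter Function Set TopologicalSpace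
open scoped Pointwise

theorem rollout_eq_iterate {X Y : Type*} (j : Y → X) (Ghat : X → Y) (n : ℕ) :
    rollout j Ghat n = (j ∘ Ghat)^[n] := by
  induction n with
  | zero => rfl
  | succ n ih => rw [iterate_succ', ← ih]; rfl

section LipschitzOnCompacts

/-- `f` is Lipschitz on every compact set, with a constant that may depend on the set. These
are the maps called locally Lipschitz in the approximation theorem. -/
def LipschitzOnCompacts {X Y : Type*} [PseudoEMetricSpace X] [PseudoEMetricSpace Y]
    (f : X → Y) : Prop :=
  ∀ Q : Set X, IsCompact Q → ∃ L : NNReal, LipschitzOnWith L f Q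

theorem lipschitzOnCompacts_iff_norm_sub_le {X Y : Type*} [SeminormedAddCommGroup X]
    [SeminormedAddCommGroup Y] {f : X → Y} :
    LipschitzOnCompacts f ↔ ∀ Q : Set X, IsCompact Q → ∃ L : ℝ, 0 ≤ L ∧
      ∀ x ∈ Q, ∀ y ∈ Q, ‖f x - f y‖ ≤ L * ‖x - y‖ := by
  simp only [LipschitzOnCompacts, NNReal.exists, lipschitzOnWith_iff_dist_le_mul, dist_eq_norm,
    NNReal.coe_mk, exists_prop]

theorem LipschitzOnCompacts.continuous {X Y : Type*} [PseudoEMetricSpace X]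
    [PseudoEMetricSpace Y] {f : X → Y} (hf : LipschitzOnCompacts f) : Continuous f :=
  CompactlyCoherentSpace.isCoherentWith.continuous_iff.2 fun Q hQ ↦
    (hf Q hQ).elim fun _ hL ↦ hL.continuousOn

theorem LipschitzOnCompacts.lipschitzWith_comp {X Y Z : Type*} [PseudoEMetricSpace X]
    [PseudoEMetricSpace Y] [PseudoEMetricSpace Z] {C : NNReal} {g : Y → Z} {f : X → Y}
    (hf : LipschitzOnCompacts f) (hg : LipschitzWith C g) : LipschitzOnCompacts (g ∘ f) :=
  fun Q hQ ↦ (hf Q hQ).imp' (C * ·) fun _ hL ↦ hg.comp_lipschitzOnWith hL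

end LipschitzOnCompacts

section UniformConvergenceOnCompacts

variable {ι X : Type*} {l : Filter ι}

theorem tendstoUniformlyOn_comp {Y Z : Type*} [UniformSpace Y] [UniformSpace Z]
    {F : ι → Y → Z} {f : Y → Z} {G : ι → X → Y} {g : X → Y} {s : Set X} {t : Set Y}
    (hF : TendstoUniformlyOn F f l t) (hf : UniformContinuousOn f t)
    (hG : TendstoUniformlyOn G g l s) (hGt : ∀ᶠ i in l, MapsTo (G i) s t) (hgt : MapsTo g s t) :
    TendstoUniformlyOn (fun i ↦ F i ∘ G i) (f ∘ g) l s := by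
  intro u hu
  obtain ⟨v, hv, hvu⟩ := comp_mem_uniformity_sets hu
  have hfG := hf.comp_tendstoUniformlyOn_eventually hGt hgt hG
  filter_upwards [hF v hv, hfG v hv, hGt] with i hFi hfGi hGi x hx
  exact hvu ⟨f (G i x), hfGi x hx, hFi (G i x) (hGi hx)⟩

theorem tendstoUniformlyOn_iterate [UniformSpace X] {F : ι → X → X} {f : X → X}
    (hf : Continuous f) (hF : ∀ K, IsCompact K → TendstoUniformlyOn F f l K)
    (hmaps : ∀ K, IsCompact K → ∃ C, IsCompact C ∧ ∀ᶠ i in l, MapsTo (F i) K C)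
    {K : Set X} (hK : IsCompact K) (n : ℕ) :
    TendstoUniformlyOn (fun i ↦ (F i)^[n]) f^[n] l K := by
  induction n generalizing K with
  | zero => exact fun u hu ↦ .of_forall fun _ _ _ ↦ refl_mem_uniformity hu
  | succ n ih =>
    obtain ⟨C, hC, hKC⟩ := hmaps K hK
    have hC' : IsCompact (C ∪ f '' K) := hC.union (hK.image hf)
    exact tendstoUniformlyOn_comp (ih hC')
      (hC'.uniformContinuousOn_of_continuous (hf.iterate n).continuousOn) (hF K hK)
      (hKC.mono fun _ hi ↦ hi.mono_right subset_union_left)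
      ((mapsTo_image f K).mono_right subset_union_right)

theorem exists_filter_tendstoUniformlyOn_isCompact {A E : Type*} [TopologicalSpace X]
    [PseudoMetricSpace E] {Φ : A → X → E} {f : X → E} {T : Set A}
    (h : ∀ Q, IsCompact Q → ∀ η > 0, ∃ a ∈ T, ∀ x ∈ Q, dist (f x) (Φ a x) < η) :
    ∃ l : Filter A, l.NeBot ∧ (∀ᶠ a in l, a ∈ T) ∧
      ∀ Q, IsCompact Q → TendstoUniformlyOn Φ f l Q := by
  choose a haT ha using fun i : Compacts X × ℕ ↦
    h i.1 i.1.isCompact _ (Nat.one_div_pos_of_nat (n := i.2))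
  refine ⟨map a atTop, inferInstance, eventually_map.2 (.of_forall haT), fun Q hQ ↦ ?_⟩
  refine Metric.tendstoUniformlyOn_iff.2 fun ε hε ↦ eventually_map.2 ?_
  obtain ⟨N, hN⟩ := exists_nat_one_div_lt hε
  filter_upwards [eventually_ge_atTop ((⟨Q, hQ⟩, N) : Compacts X × ℕ)] with i ⟨hQi, hNi⟩ x hx
  calc dist (f x) (Φ (a i) x) < 1 / (i.2 + 1) := ha i x (hQi hx)
    _ ≤ 1 / (N + 1) := Nat.one_div_le_one_div hNi
    _ < ε := hN

theorem exists_isCompact_eventually_mapsTo_add {Y Z : Type*} [UniformSpace Y] [Zero Y]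
    [TopologicalSpace Z] [Add Z] [ContinuousAdd Z] {j : Y → Z} (hj : IsCompactOperator j)
    {A : ι → X → Z} {D : ι → X → Y} {K : Set X} {C : Set Z} (hC : IsCompact C)
    (hA : ∀ᶠ i in l, MapsTo (A i) K C) (hD : TendstoUniformlyOn D 0 l K) :
    ∃ C', IsCompact C' ∧ ∀ᶠ i in l, MapsTo (fun x ↦ A i x + j (D i x)) K C' := by
  obtain ⟨B, hB, hjB⟩ := hj
  obtain ⟨u, hu, huB⟩ := UniformSpace.mem_nhds_iff.1 hjB
  refine ⟨C + B, hC.add hB, ?_⟩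
  filter_upwards [hA, hD u hu] with i hAi hDi x hx
  exact add_mem_add (hAi hx) (huB (hDi x hx))

theorem tendstoUniformlyOn_iterate_add_compact [UniformSpace X] [AddGroup X] [IsUniformAddGroup X]
    {Y : Type*} [UniformSpace Y] [Zero Y] {j : Y → X} (hj : UniformContinuous j) (hj_zero : j 0 = 0)
    (hj_cpt : IsCompactOperator j) {G : X → X} (hG : Continuous G) {A : ι → X → X} {D : ι → X → Y}
    (hA : ∀ Q, IsCompact Q → TendstoUniformlyOn A G l Q)
    (hA_cpt : ∀ Q, IsCompact Q → ∃ C, IsCompact C ∧ ∀ᶠ i in l, MapsTo (A i) Q C)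
    (hD : ∀ Q, IsCompact Q → TendstoUniformlyOn D 0 l Q)
    {K : Set X} (hK : IsCompact K) (n : ℕ) :
    TendstoUniformlyOn (fun i ↦ (fun x ↦ A i x + j (D i x))^[n]) G^[n] l K := by
  refine tendstoUniformlyOn_iterate hG (fun Q hQ ↦ ?_) (fun Q hQ ↦ ?_) hK n
  · have hjD : TendstoUniformlyOn (fun i x ↦ j (D i x)) 0 l Q := by
      simpa only [comp_def, Pi.zero_apply, hj_zero] using! hj.comp_tendstoUniformlyOn (hD Q hQ)
    simpa only [add_zero] using! (hA Q hQ).add hjD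
  · obtain ⟨C, hC, hAC⟩ := hA_cpt Q hQ
    exact exists_isCompact_eventually_mapsTo_add hj_cpt hC hAC (hD Q hQ)

end UniformConvergenceOnCompacts

theorem selfcomp_approx_by_rollout_general {ι X Y : Type*} [SeminormedAddCommGroup X]
    [SeminormedAddCommGroup Y] (j : Y →+ X) (hj : Continuous j) (hj_cpt : IsCompactOperator j)
    {G : X → X} (hG : Continuous G) (M : ι → X → Y) (s : Set ι)
    (hM_approx : ∀ Q, IsCompact Q → ∀ η > 0, ∃ i ∈ s, ∀ x ∈ Q, ‖j (M i x) - x‖ < η)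
    (hM_cpt : ∀ Q, IsCompact Q → IsCompact (closure (⋃ i ∈ s, (fun x ↦ j (M i x)) '' Q)))
    (F : Set (X → Y))
    (hF : ∀ i ∈ s, ∀ Q, IsCompact Q → ∀ η > 0, ∃ Ghat ∈ F, ∀ x ∈ Q, ‖M i (G x) - Ghat x‖ < η)
    {K : Set X} (hK : IsCompact K) (n : ℕ) {ε : ℝ} (hε : 0 < ε) :
    ∃ Ghat ∈ F, ∀ a ∈ K, ‖G^[n] a - rollout j Ghat n a‖ < ε := by
  let A : ι × (X → Y) → X → X := fun p x ↦ j (M p.1 (G x))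
  let D : ι × (X → Y) → X → Y := fun p x ↦ p.2 x - M p.1 (G x)
  have split (p : ι × (X → Y)) : j ∘ p.2 = fun x ↦ A p x + j (D p x) := by
    ext x; simp [A, D]
  have approx : ∀ Q, IsCompact Q → ∀ η > 0, ∃ p ∈ s ×ˢ F, ∀ x ∈ Q,
      dist (G x, (0 : Y)) (A p x, D p x) < η := by
    intro Q hQ η hη
    obtain ⟨i, hi, hMi⟩ := hM_approx (G '' Q) (hQ.image hG) η hη
    obtain ⟨Ghat, hGhat, hMG⟩ := hF i hi Q hQ η hη
    refine ⟨(i, Ghat), ⟨hi, hGhat⟩, fun x hx ↦ max_lt ?_ ?_⟩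
    · simpa [A, dist_eq_norm'] using hMi (G x) (mem_image_of_mem G hx)
    · simpa [D, dist_eq_norm] using hMG x hx
  obtain ⟨l, hl, hmem, hconv⟩ := exists_filter_tendstoUniformlyOn_isCompact approx
  have hA_cpt Q (hQ : IsCompact Q) : ∃ C, IsCompact C ∧ ∀ᶠ p in l, MapsTo (A p) Q C := by
    refine ⟨_, hM_cpt (G '' Q) (hQ.image hG), hmem.mono fun p hp x hx ↦ subset_closure ?_⟩
    exact mem_biUnion hp.1 ⟨G x, mem_image_of_mem G hx, rfl⟩
  have hiter := tendstoUniformlyOn_iterate_add_compact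
    (uniformContinuous_addMonoidHom_of_continuous hj) (map_zero j) hj_cpt hG
    (fun Q hQ ↦ uniformContinuous_fst.comp_tendstoUniformlyOn (hconv Q hQ)) hA_cpt
    (fun Q hQ ↦ uniformContinuous_snd.comp_tendstoUniformlyOn (hconv Q hQ)) hK n
  obtain ⟨p, hp, hpF⟩ := ((Metric.tendstoUniformlyOn_iff.1 hiter ε hε).and hmem).exists
  refine ⟨p.2, hpF.2, fun a ha ↦ ?_⟩
  rw [rollout_eq_iterate, split, ← dist_eq_norm]
  exact hp a ha

/-- Approximation of the `n`-fold self-composition of a locally Lipschitz map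
`G : X → X` by rollouts of elements of a family `F` of maps `X → Y`, where
`j : Y → X` is a compact embedding, `(M_δ)` is an abstract mollification family,
and `F` approximates every locally Lipschitz map `X → Y` uniformly on compact sets. -/
theorem selfcomp_approx_by_rollout
    {X Y : Type*} [NormedAddCommGroup X] [NormedSpace ℝ X] [CompleteSpace X]
    [NormedAddCommGroup Y] [NormedSpace ℝ Y]
    (j : Y →L[ℝ] X) (hj_inj : Function.Injective j)
    (hj_cpt : ∀ B : Set Y, Bornology.IsBounded B → IsCompact (closure (⇑j '' B)))
    (G : X → X)
    (hG : ∀ Q : Set X, IsCompact Q → ∃ L : ℝ, 0 ≤ L ∧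
      ∀ x ∈ Q, ∀ y ∈ Q, ‖G x - G y‖ ≤ L * ‖x - y‖)
    (M : ℝ → X →L[ℝ] Y)
    (hM₁ : ∀ Q : Set X, IsCompact Q → ∀ η : ℝ, 0 < η → ∀ δbar ∈ Set.Ioc (0 : ℝ) 1,
      ∃ δ₀ ∈ Set.Ioc (0 : ℝ) δbar, ∀ x ∈ Q, ‖j (M δ₀ x) - x‖ < η)
    (hM₂ : ∀ Q : Set X, IsCompact Q → ∀ δbar ∈ Set.Ioc (0 : ℝ) 1,
      IsCompact (closure (Q ∪ ⋃ δ ∈ Set.Ioc (0 : ℝ) δbar, (fun x => j (M δ x)) '' Q)))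
    (F : Set (X → Y))
    (hF : ∀ H : X → Y,
      (∀ Q : Set X, IsCompact Q → ∃ L : ℝ, 0 ≤ L ∧
        ∀ x ∈ Q, ∀ y ∈ Q, ‖H x - H y‖ ≤ L * ‖x - y‖) →
      ∀ Q : Set X, IsCompact Q → ∀ η : ℝ, 0 < η →
        ∃ Ghat ∈ F, ∀ x ∈ Q, ‖H x - Ghat x‖ < η)
    (K : Set X) (hK : IsCompact K) (n : ℕ) (hn : 1 ≤ n) (ε : ℝ) (hε : 0 < ε) :
    ∃ Ghat ∈ F, ∀ a ∈ K, ‖G^[n] a - rollout (⇑j) Ghat n a‖ < ε := by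
  have hG' : LipschitzOnCompacts G := lipschitzOnCompacts_iff_norm_sub_le.2 hG
  exact selfcomp_approx_by_rollout_general (j : Y →+ X) j.continuous
    ((isCompactOperator_iff_exists_mem_nhds_isCompact_closure_image j).2
      ⟨_, Metric.ball_mem_nhds 0 one_pos, hj_cpt _ Metric.isBounded_ball⟩)
    hG'.continuous (fun δ ↦ M δ) (Ioc 0 1)
    (fun Q hQ η hη ↦ hM₁ Q hQ η hη 1 ⟨one_pos, le_rfl⟩)
    (fun Q hQ ↦ (hM₂ Q hQ 1 ⟨one_pos, le_rfl⟩).of_isClosed_subset isClosed_closure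
      (closure_mono subset_union_right))
    F (fun δ _ ↦ hF _ <| lipschitzOnCompacts_iff_norm_sub_le.1 <|
      hG'.lipschitzWith_comp (M δ).lipschitz) hK n hε
end
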